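/- arXiv:2303.15204 — 6 statements merged into one kernel-verified Lean document; each statement's English description precedes it below -/
import Mathlib

section
/- For every natural number n there exist constants c > 0 and C > 0, depending only on n, with the following property: for every point x0 ∈ ℝ, every h > 0, and every coefficient vector a : Fin (n+1) → ℝ, the polynomial p(x) = Σ_{i=0}^{n} a_i · ((x − x0)/h)^i satisfies c · h · Σ_{i=0}^{n} a_i² ≤ ∫_{x0 − h/2}^{x0 + h/2} p(x)² dx ≤ C · h · Σ_{i=0}^{n} a_i². -/
noncomputable def auxF (n : ℕ) (a : Fin (n + 1) → ℝ) : ℝ :=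
  ∫ t in (-(1 / 2) : ℝ)..(1 / 2), (∑ i : Fin (n + 1), a i * t ^ (i : ℕ)) ^ 2

lemma auxF_cont (n : ℕ) : Continuous (auxF n) := by
  unfold auxF
  apply intervalIntegral.continuous_parametric_intervalIntegral_of_continuous'
  simp only [Function.uncurry_def]
  fun_prop

lemma auxF_smul (n : ℕ) (r : ℝ) (a : Fin (n + 1) → ℝ) :
    auxF n (fun i => r * a i) = r ^ 2 * auxF n a := by
  unfold auxF
  rw [← intervalIntegral.integral_const_mul]
  congr 1
  ext t
  rw [← mul_pow, Finset.mul_sum]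
  simp only [mul_assoc]

lemma auxF_pos (n : ℕ) (a : Fin (n + 1) → ℝ) (ha : a ≠ 0) : 0 < auxF n a := by
  unfold auxF
  apply intervalIntegral.integral_pos (by norm_num)
  · exact Continuous.continuousOn (by fun_prop)
  · intro x _
    positivity
  · by_contra! hcon
    apply ha
    set p : Polynomial ℝ := ∑ i : Fin (n + 1), Polynomial.C (a i) * Polynomial.X ^ (i : ℕ) with hp
    have hp0 : p = 0 := by
      apply Polynomial.eq_zero_of_infinite_isRoot
      refine Set.Infinite.mono ?_ (Set.Icc_infinite (show (-(1 / 2) : ℝ) < 1 / 2 by norm_num))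
      intro x hx
      have h2 := hcon x hx
      have h3 : (∑ i : Fin (n + 1), a i * x ^ (i : ℕ)) = 0 := by
        have := le_antisymm h2 (sq_nonneg _)
        exact pow_eq_zero_iff (two_ne_zero) |>.mp this
      simp [hp, Polynomial.IsRoot, Polynomial.eval_finset_sum, h3]
    funext j
    have h4 : p.coeff j = a j := by
      simp [hp, Polynomial.finset_sum_coeff, Polynomial.coeff_X_pow, Fin.val_inj]
    rw [← h4, hp0]
    simp

lemma auxF_change (n : ℕ) (x0 h : ℝ) (hh : 0 < h) (a : Fin (n + 1) → ℝ) :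
    (∫ x in (x0 - h / 2)..(x0 + h / 2),
          (∑ i : Fin (n + 1), a i * ((x - x0) / h) ^ (i : ℕ)) ^ 2) = h * auxF n a := by
  rw [intervalIntegral.integral_comp_sub_right
    (fun x => (∑ i : Fin (n + 1), a i * (x / h) ^ (i : ℕ)) ^ 2) x0,
    intervalIntegral.integral_comp_div
    (fun x => (∑ i : Fin (n + 1), a i * x ^ (i : ℕ)) ^ 2) hh.ne']
  have e1 : (x0 - h / 2 - x0) / h = -(1 / 2) := by field_simp; ring
  have e2 : (x0 + h / 2 - x0) / h = 1 / 2 := by field_simp; ring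
  rw [e1, e2, smul_eq_mul, auxF]

/-- Norm equivalence, uniform in the midpoint `x0` and length `h`, between the squared
`L²` norm over `[x0 - h/2, x0 + h/2]` of a polynomial expanded in the shifted and scaled
monomial basis `x ↦ ((x - x0)/h)^i`, `0 ≤ i ≤ n`, and `h` times the squared `ℓ²` norm of
its coefficient vector. -/
theorem stmt0 (n : ℕ) :
    ∃ c > (0 : ℝ), ∃ C > (0 : ℝ), ∀ (x0 h : ℝ), 0 < h → ∀ a : Fin (n + 1) → ℝ,
      c * h * (∑ i : Fin (n + 1), a i ^ 2) ≤
        (∫ x in (x0 - h / 2)..(x0 + h / 2),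
          (∑ i : Fin (n + 1), a i * ((x - x0) / h) ^ (i : ℕ)) ^ 2) ∧
      (∫ x in (x0 - h / 2)..(x0 + h / 2),
          (∑ i : Fin (n + 1), a i * ((x - x0) / h) ^ (i : ℕ)) ^ 2) ≤
        C * h * (∑ i : Fin (n + 1), a i ^ 2) := by
  set S : Set (Fin (n + 1) → ℝ) := {a | ∑ i, a i ^ 2 = 1} with hS
  have hcl : IsClosed S := isClosed_eq (by fun_prop) continuous_const
  have hK : IsCompact S := by
    refine (isCompact_Icc (a := fun _ : Fin (n + 1) => (-1 : ℝ))
      (b := fun _ => 1)).of_isClosed_subset hcl ?_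
    intro a ha
    have hb : ∀ i, a i ^ 2 ≤ 1 := fun i => by
      have := Finset.single_le_sum (f := fun i => a i ^ 2) (fun i _ => sq_nonneg _)
        (Finset.mem_univ i)
      exact this.trans_eq ha
    exact ⟨fun i => (abs_le.mp ((sq_le_one_iff_abs_le_one _).mp (hb i))).1,
      fun i => (abs_le.mp ((sq_le_one_iff_abs_le_one _).mp (hb i))).2⟩
  have hne : S.Nonempty := ⟨Pi.single 0 1, by simp [hS, Pi.single_apply, ite_pow]⟩
  have hpos : ∀ a ∈ S, 0 < auxF n a := by
    intro a ha
    apply auxF_pos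
    rintro rfl
    simp [hS] at ha
  obtain ⟨u, hu, hmin⟩ := hK.exists_isMinOn hne (auxF_cont n).continuousOn
  obtain ⟨v, hv, hmax⟩ := hK.exists_isMaxOn hne (auxF_cont n).continuousOn
  refine ⟨auxF n u, hpos u hu, auxF n v, hpos v hv, ?_⟩
  intro x0 h hh a
  rw [auxF_change n x0 h hh a]
  have key : auxF n u * (∑ i, a i ^ 2) ≤ auxF n a ∧ auxF n a ≤ auxF n v * (∑ i, a i ^ 2) := by
    have hs0 : 0 ≤ ∑ i, a i ^ 2 := Finset.sum_nonneg fun i _ => sq_nonneg _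
    rcases hs0.eq_or_lt with hs | hs
    · have ha : a = fun i => 0 * a i := by
        funext i
        have := (Finset.sum_eq_zero_iff_of_nonneg (fun i _ => sq_nonneg (a i))).mp hs.symm i
          (Finset.mem_univ i)
        simpa using this
      have h0 : auxF n a = 0 := by
        rw [ha, auxF_smul]
        simp
      rw [← hs, h0]
      simp
    · set s := ∑ i, a i ^ 2 with hsd
      have hr : (Real.sqrt s)⁻¹ ^ 2 = s⁻¹ := by rw [inv_pow, Real.sq_sqrt hs0]
      have hm : (fun i => (Real.sqrt s)⁻¹ * a i) ∈ S := by
        simp only [hS, Set.mem_setOf_eq, mul_pow, hr]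
        rw [← Finset.mul_sum, ← hsd, inv_mul_cancel₀ hs.ne']
      have h1 := isMinOn_iff.mp hmin _ hm
      have h2 := isMaxOn_iff.mp hmax _ hm
      rw [auxF_smul, hr, inv_mul_eq_div] at h1 h2
      exact ⟨(le_div_iff₀ hs).mp h1, (div_le_iff₀ hs).mp h2⟩
  constructor
  · nlinarith [mul_le_mul_of_nonneg_left key.1 hh.le]
  · nlinarith [mul_le_mul_of_nonneg_left key.2 hh.le]
end

section
/- For every natural number n and every ρ ∈ (0, 1] there exist constants c > 0 and C > 0, depending only on n and ρ, with the following property: for every x0 ∈ ℝ², every h > 0, every measurable set K ⊆ ℝ² satisfying closedBall(x0, ρ·h) ⊆ K ⊆ closedBall(x0, h), and every family of coefficients b_α ∈ ℝ indexed by multi-indices α = (α₁, α₂) with α₁ + α₂ ≤ n, the polynomial p(x) = Σ_{|α| ≤ n} b_α · ((x₁ − x0₁)/h)^{α₁} · ((x₂ − x0₂)/h)^{α₂} satisfies c · h² · Σ_{|α| ≤ n} b_α² ≤ ∫_K p(x)² dx ≤ C · h² · Σ_{|α| ≤ n} b_α². -/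
open MeasureTheory Metric

abbrev E2 := EuclideanSpace ℝ (Fin 2)

noncomputable def PP (S : Finset (ℕ × ℕ)) (b : ℕ × ℕ → ℝ) (y : E2) : ℝ :=
  ∑ α ∈ S, b α * (y 0) ^ α.1 * (y 1) ^ α.2

lemma PP_cont (S : Finset (ℕ × ℕ)) (b : ℕ × ℕ → ℝ) : Continuous (PP S b) := by
  unfold PP; fun_prop

lemma PP_int (S : Finset (ℕ × ℕ)) (b : ℕ × ℕ → ℝ) (z : E2) (r : ℝ) :
    IntegrableOn (fun y => PP S b y ^ 2) (closedBall z r) :=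
  ((PP_cont S b).pow 2).continuousOn.integrableOn_compact (isCompact_closedBall z r)

lemma scale_int (g : E2 → ℝ) (x0 : E2) (h r : ℝ) (hh : 0 < h) :
    ∫ x in closedBall x0 (r * h), g (h⁻¹ • (x - x0)) = h ^ 2 * ∫ y in closedBall (0 : E2) r, g y := by
  rw [← integral_indicator measurableSet_closedBall, ← integral_indicator measurableSet_closedBall]
  have : ∀ x, (closedBall x0 (r * h)).indicator (fun x => g (h⁻¹ • (x - x0))) x
      = (fun z => (closedBall (0 : E2) r).indicator g (h⁻¹ • z)) (x - x0) := by
    intro x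
    have hm : x ∈ closedBall x0 (r * h) ↔ h⁻¹ • (x - x0) ∈ closedBall (0 : E2) r := by
      rw [mem_closedBall, mem_closedBall_zero_iff, norm_smul, dist_eq_norm, norm_inv,
        Real.norm_of_nonneg hh.le, inv_mul_le_iff₀ hh, mul_comm]
    by_cases hx : x ∈ closedBall x0 (r * h)
    · simp only [Set.indicator_of_mem hx, Set.indicator_of_mem (hm.1 hx)]
    · simp only [Set.indicator_of_notMem hx, Set.indicator_of_notMem (fun h' => hx (hm.2 h'))]
  simp_rw [this]
  rw [integral_sub_right_eq_self (fun z => (closedBall (0 : E2) r).indicator g (h⁻¹ • z)),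
    Measure.integral_comp_inv_smul_of_nonneg _ _ hh.le]
  simp

lemma quad_lower {ι : Type*} [Fintype ι] (Q : EuclideanSpace ℝ ι → ℝ) (hc : Continuous Q)
    (hs : ∀ (t : ℝ) b, Q (t • b) = t ^ 2 * Q b) (hp : ∀ b, b ≠ 0 → 0 < Q b) :
    ∃ c > 0, ∀ b, c * ‖b‖ ^ 2 ≤ Q b := by
  by_cases hne : (sphere (0 : EuclideanSpace ℝ ι) 1).Nonempty
  · obtain ⟨u, hu, hmin⟩ := (isCompact_sphere _ _).exists_isMinOn hne hc.continuousOn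
    have hu1 : ‖u‖ = 1 := by simpa using hu
    refine ⟨Q u, hp u (by rintro rfl; simp at hu1), fun b => ?_⟩
    by_cases hb : b = 0
    · subst hb
      have := hs 0 0
      simp at this
      simp [this]
    · have hb' : ‖b‖ ≠ 0 := norm_ne_zero_iff.2 hb
      have h1 : Q u ≤ Q (‖b‖⁻¹ • b) := hmin (by simp [norm_smul, hb'])
      have h2 := hs ‖b‖ (‖b‖⁻¹ • b)
      rw [smul_inv_smul₀ hb'] at h2
      rw [h2, mul_comm]
      gcongr
  · refine ⟨1, one_pos, fun b => ?_⟩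
    have hb : b = 0 := by
      by_contra hb
      exact hne ⟨‖b‖⁻¹ • b, by simp [norm_smul, hb]⟩
    subst hb
    have := hs 0 0
    simp at this
    simp [this]

lemma PP_zero (S : Finset (ℕ × ℕ)) (b : ℕ × ℕ → ℝ) (ρ : ℝ) (hρ : 0 < ρ)
    (h0 : ∀ y ∈ ball (0 : E2) ρ, PP S b y = 0) : ∀ α ∈ S, b α = 0 := by
  classical
  let e : ℕ × ℕ → (Fin 2 →₀ ℕ) := fun α => Finsupp.equivFunOnFinite.symm ![α.1, α.2]
  have he : Function.Injective e := by
    intro α β hab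
    have h1 := DFunLike.congr_fun hab 0
    have h2 := DFunLike.congr_fun hab 1
    simp [e] at h1 h2
    exact Prod.ext h1 h2
  let p : MvPolynomial (Fin 2) ℝ := ∑ α ∈ S, MvPolynomial.monomial (e α) (b α)
  have hev : ∀ x : Fin 2 → ℝ, MvPolynomial.eval x p = PP S b (WithLp.toLp 2 x) := by
    intro x
    simp only [p, map_sum, PP, MvPolynomial.eval_monomial]
    refine Finset.sum_congr rfl fun α _ => ?_
    rw [Finsupp.prod_fintype _ _ (by simp)]
    simp [e, Fin.prod_univ_two, mul_assoc]
  have hp : p = 0 := by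
    have hinf : ∀ i : Fin 2, Set.Infinite (Set.Ioo (-(ρ/2)) (ρ/2)) :=
      fun _ => Set.Ioo_infinite (by linarith)
    refine MvPolynomial.funext_set (fun _ : Fin 2 => Set.Ioo (-(ρ/2)) (ρ/2)) hinf ?_
    intro x hx
    rw [hev, map_zero]
    apply h0
    have hx0 := hx 0 (Set.mem_univ _)
    have hx1 := hx 1 (Set.mem_univ _)
    simp only [Set.mem_Ioo] at hx0 hx1
    rw [mem_ball_zero_iff, EuclideanSpace.norm_eq, Real.sqrt_lt' hρ]
    simp only [Fin.sum_univ_two, Real.norm_eq_abs, sq_abs]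
    nlinarith
  intro α hα
  have := congrArg (MvPolynomial.coeff (e α)) hp
  simp only [p, MvPolynomial.coeff_sum, MvPolynomial.coeff_monomial, he.eq_iff] at this
  simpa [hα] using this

lemma lower (S : Finset (ℕ × ℕ)) (ρ : ℝ) (hρ : 0 < ρ) :
    ∃ c > 0, ∀ b : ℕ × ℕ → ℝ, c * ∑ α ∈ S, b α ^ 2 ≤
      ∫ y in closedBall (0 : E2) ρ, PP S b y ^ 2 := by
  classical
  let ex : EuclideanSpace ℝ S → ℕ × ℕ → ℝ := fun v α => if hα : α ∈ S then v ⟨α, hα⟩ else 0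
  have hex : ∀ v (α : S), ex v α = v α := by intro v α; simp [ex]
  have hexP : ∀ v y, PP S (ex v) y = ∑ α : S, v α * (y 0) ^ α.1.1 * (y 1) ^ α.1.2 := by
    intro v y
    rw [PP, ← Finset.sum_coe_sort]
    simp only [hex]
  have key : ∃ c > 0, ∀ v : EuclideanSpace ℝ S, c * ‖v‖ ^ 2 ≤
      ∫ y in closedBall (0 : E2) ρ, PP S (ex v) y ^ 2 := by
    refine quad_lower
      (fun v : EuclideanSpace ℝ S => ∫ y in closedBall (0 : E2) ρ, PP S (ex v) y ^ 2) ?_ ?_ ?_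
    · have : (fun v : EuclideanSpace ℝ S => ∫ y in closedBall (0 : E2) ρ, PP S (ex v) y ^ 2)
        = fun v => ∑ α : S, ∑ β : S, v α * v β * ∫ y in closedBall (0 : E2) ρ,
          ((y 0) ^ α.1.1 * (y 1) ^ α.1.2) * ((y 0) ^ β.1.1 * (y 1) ^ β.1.2) := by
        funext v
        have hi : ∀ α β : S, IntegrableOn (fun y : E2 => v α * v β * (((y 0) ^ α.1.1 * (y 1) ^ α.1.2) *
            ((y 0) ^ β.1.1 * (y 1) ^ β.1.2))) (closedBall 0 ρ) := fun α β =>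
          ContinuousOn.integrableOn_compact (isCompact_closedBall _ _) (by fun_prop)
        simp_rw [← integral_const_mul]
        have h1 : ∀ α : S, ∑ β : S, ∫ y in closedBall (0 : E2) ρ, v α * v β * (((y 0) ^ α.1.1 * (y 1) ^ α.1.2) *
            ((y 0) ^ β.1.1 * (y 1) ^ β.1.2)) = ∫ y in closedBall (0 : E2) ρ, ∑ β : S, v α * v β * (((y 0) ^ α.1.1 * (y 1) ^ α.1.2) *
            ((y 0) ^ β.1.1 * (y 1) ^ β.1.2)) := fun α =>
          (integral_finset_sum _ fun β _ => hi α β).symm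
        simp_rw [h1]
        rw [← integral_finset_sum _ fun α _ => integrable_finset_sum _ fun β _ => hi α β]
        congr 1
        funext y
        rw [hexP, sq, Finset.sum_mul_sum]
        refine Finset.sum_congr rfl fun α _ => Finset.sum_congr rfl fun β _ => by ring
      rw [this]
      fun_prop
    · intro t v
      rw [← integral_const_mul]
      congr 1
      funext y
      rw [← mul_pow, hexP, hexP, Finset.mul_sum]
      congr 1
      refine Finset.sum_congr rfl fun α _ => by simp; ring
    · intro v hv
      by_contra hle
      have h0 : ∫ y in closedBall (0 : E2) ρ, PP S (ex v) y ^ 2 = 0 :=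
        le_antisymm (not_lt.1 hle) (integral_nonneg fun y => sq_nonneg _)
      rw [integral_eq_zero_iff_of_nonneg (fun y => sq_nonneg _) (PP_int S _ _ _)] at h0
      have h1 := ae_restrict_of_ae_restrict_of_subset (ball_subset_closedBall) h0
      have h2 := Measure.eqOn_open_of_ae_eq h1 isOpen_ball
        ((PP_cont S (ex v)).pow 2).continuousOn continuousOn_const
      apply hv
      ext α
      rw [← hex]
      refine PP_zero S (ex v) ρ hρ (fun y hy => ?_) α.1 α.2
      have := h2 hy
      simpa using this
  · obtain ⟨c, hc, H⟩ := key
    refine ⟨c, hc, fun b => ?_⟩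
    have := H (WithLp.toLp 2 (fun α : S => b α))
    rw [EuclideanSpace.norm_sq_eq] at this
    simp only [hexP, Real.norm_eq_abs, sq_abs] at this
    rw [Finset.sum_coe_sort S (fun α => b α ^ 2)] at this
    convert this using 5
    rw [PP, ← Finset.sum_coe_sort]

lemma upper (S : Finset (ℕ × ℕ)) :
    ∃ C > 0, ∀ b : ℕ × ℕ → ℝ, 
      ∫ y in closedBall (0 : E2) 1, PP S b y ^ 2 ≤ C * ∑ α ∈ S, b α ^ 2 := by
  refine ⟨S.card * volume.real (closedBall (0 : E2) 1) + 1, by positivity, fun b => ?_⟩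
  have hb : ∀ y ∈ closedBall (0 : E2) 1, ‖PP S b y ^ 2‖ ≤ S.card * ∑ α ∈ S, b α ^ 2 := by
    intro y hy
    rw [Real.norm_of_nonneg (sq_nonneg _)]
    refine (sq_sum_le_card_mul_sum_sq).trans ?_
    refine mul_le_mul_of_nonneg_left (Finset.sum_le_sum fun α _ => ?_) (Nat.cast_nonneg _)
    have hy1 : ‖y‖ ≤ 1 := by simpa using hy
    have hc : ∀ i, |y i| ≤ 1 := fun i => (PiLp.norm_apply_le y i).trans hy1
    rw [mul_assoc, mul_pow]
    have : (y 0 ^ α.1 * y 1 ^ α.2) ^ 2 ≤ 1 := by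
      rw [sq_le_one_iff_abs_le_one, abs_mul, abs_pow, abs_pow]
      exact mul_le_one₀ (pow_le_one₀ (abs_nonneg _) (hc 0)) (by positivity)
        (pow_le_one₀ (abs_nonneg _) (hc 1))
    exact mul_le_of_le_one_right (sq_nonneg _) this
  have := norm_setIntegral_le_of_norm_le_const (μ := volume)
    (isCompact_closedBall (0 : E2) 1).measure_lt_top hb
  have h2 := (Real.le_norm_self _).trans this
  have h3 : 0 ≤ ∑ α ∈ S, b α ^ 2 := Finset.sum_nonneg fun _ _ => sq_nonneg _
  nlinarith

/-- Two-dimensional (bulk) norm equivalence: on a shape-regular element `K` with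
`closedBall x0 (ρ*h) ⊆ K ⊆ closedBall x0 h`, the squared `L²(K)` norm of a polynomial
expanded in the shifted and scaled monomial basis
`x ↦ ((x₁ - x0₁)/h)^{α₁} ((x₂ - x0₂)/h)^{α₂}`, `|α| ≤ n`, is equivalent to `h²` times the
squared `ℓ²` norm of its coefficient vector, uniformly in `x0`, `h` and `K`. -/
theorem stmt1 (n : ℕ) (ρ : ℝ) (hρ0 : 0 < ρ) (hρ1 : ρ ≤ 1) :
    ∃ c > (0 : ℝ), ∃ C > (0 : ℝ),
      ∀ (x0 : EuclideanSpace ℝ (Fin 2)) (h : ℝ), 0 < h →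
        ∀ K : Set (EuclideanSpace ℝ (Fin 2)), MeasurableSet K →
          closedBall x0 (ρ * h) ⊆ K → K ⊆ closedBall x0 h →
            ∀ b : ℕ × ℕ → ℝ,
              c * h ^ 2 *
                  (∑ α ∈ (Finset.range (n + 1) ×ˢ Finset.range (n + 1)).filter
                      (fun α => α.1 + α.2 ≤ n), b α ^ 2) ≤
                (∫ x in K,
                  (∑ α ∈ (Finset.range (n + 1) ×ˢ Finset.range (n + 1)).filter
                      (fun α => α.1 + α.2 ≤ n),
                    b α * ((x 0 - x0 0) / h) ^ α.1 * ((x 1 - x0 1) / h) ^ α.2) ^ 2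
                  ∂volume) ∧
              (∫ x in K,
                  (∑ α ∈ (Finset.range (n + 1) ×ˢ Finset.range (n + 1)).filter
                      (fun α => α.1 + α.2 ≤ n),
                    b α * ((x 0 - x0 0) / h) ^ α.1 * ((x 1 - x0 1) / h) ^ α.2) ^ 2
                  ∂volume) ≤
                C * h ^ 2 *
                  (∑ α ∈ (Finset.range (n + 1) ×ˢ Finset.range (n + 1)).filter
                      (fun α => α.1 + α.2 ≤ n), b α ^ 2) := by
  set S := (Finset.range (n + 1) ×ˢ Finset.range (n + 1)).filter
                      (fun α => α.1 + α.2 ≤ n) with hS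
  obtain ⟨c, hc, hl⟩ := lower S ρ hρ0
  obtain ⟨C, hC, hu⟩ := upper S
  refine ⟨c, hc, C, hC, fun x0 h hh K hK h1 h2 b => ?_⟩
  have hf : (fun x : EuclideanSpace ℝ (Fin 2) => (∑ α ∈ S,
      b α * ((x 0 - x0 0) / h) ^ α.1 * ((x 1 - x0 1) / h) ^ α.2) ^ 2)
      = fun x => (fun y => PP S b y ^ 2) (h⁻¹ • (x - x0)) := by
    funext x
    simp [PP, div_eq_inv_mul]
  rw [hf]
  have hcont : Continuous fun x : E2 => (fun y => PP S b y ^ 2) (h⁻¹ • (x - x0)) := by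
    have := PP_cont S b
    fun_prop
  have hint : IntegrableOn (fun x : E2 => (fun y => PP S b y ^ 2) (h⁻¹ • (x - x0)))
      (closedBall x0 h) :=
    hcont.continuousOn.integrableOn_compact (isCompact_closedBall _ _)
  have hl' := scale_int (fun y => PP S b y ^ 2) x0 h ρ hh
  have hu' := scale_int (fun y => PP S b y ^ 2) x0 h 1 hh
  rw [one_mul] at hu'
  have hh2 : 0 ≤ h ^ 2 := sq_nonneg h
  constructor
  · calc _ = h ^ 2 * (c * ∑ α ∈ S, b α ^ 2) := by ring
      _ ≤ h ^ 2 * _ := mul_le_mul_of_nonneg_left (hl b) hh2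
      _ = _ := hl'.symm
      _ ≤ _ := setIntegral_mono_set (hint.mono_set h2)
        (Filter.Eventually.of_forall fun _ => sq_nonneg _) h1.eventuallyLE
  · calc _ ≤ _ := setIntegral_mono_set hint
          (Filter.Eventually.of_forall fun _ => sq_nonneg _) h2.eventuallyLE
      _ = _ := hu'
      _ ≤ h ^ 2 * _ := mul_le_mul_of_nonneg_left (hu b) hh2
      _ = _ := by ring
end

section
/- For every natural number n and every ρ ∈ (0, 1] there exists a constant C > 0, depending only on n and ρ, with the following property: for every x0 ∈ ℝ², every h > 0, every measurable set K ⊆ ℝ² with closedBall(x0, ρ·h) ⊆ K ⊆ closedBall(x0, h), and every polynomial function p : ℝ² → ℝ of total degree at most n, one has sup_{x ∈ K} |p(x)| ≤ C · h^{−1} · ( ∫_K p(x)² dx )^{1/2}. -/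
open MeasureTheory Metric

abbrev PlaneE := EuclideanSpace ℝ (Fin 2)

lemma pe_cont (q : MvPolynomial (Fin 2) ℝ) :
    Continuous (fun x : PlaneE => MvPolynomial.eval (fun i => x i) q) :=
  (MvPolynomial.continuous_eval q).comp (by fun_prop)

lemma pe_memLp (q : MvPolynomial (Fin 2) ℝ) (ρ : ℝ) :
    MemLp (fun x : PlaneE => MvPolynomial.eval (fun i => x i) q) 2
      (volume.restrict (closedBall (0 : PlaneE) ρ)) := by
  rw [memLp_two_iff_integrable_sq (pe_cont q).aestronglyMeasurable]
  exact ((pe_cont q).pow 2).continuousOn.integrableOn_compact (isCompact_closedBall _ _)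

noncomputable def peT (ρ : ℝ) : MvPolynomial (Fin 2) ℝ →ₗ[ℝ]
    Lp ℝ 2 ((volume : Measure PlaneE).restrict (closedBall (0 : PlaneE) ρ)) where
  toFun q := (pe_memLp q ρ).toLp _
  map_add' p q := by
    rw [← MemLp.toLp_add]
    congr 1
    ext x; simp
  map_smul' c q := by
    rw [RingHom.id_apply, ← MemLp.toLp_const_smul]
    congr 1
    ext x; simp

noncomputable def peS : MvPolynomial (Fin 2) ℝ →ₗ[ℝ] C(closedBall (0 : PlaneE) 1, ℝ) where
  toFun q := ⟨fun x => MvPolynomial.eval (fun i => x.1 i) q, (pe_cont q).comp continuous_subtype_val⟩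
  map_add' p q := by ext x; simp
  map_smul' c q := by ext x; simp

lemma peT_norm (ρ : ℝ) (q : MvPolynomial (Fin 2) ℝ) :
    ‖peT ρ q‖ = Real.sqrt (∫ y in closedBall (0 : PlaneE) ρ,
      (MvPolynomial.eval (fun i => y i) q) ^ 2) := by
  have h : ‖peT ρ q‖ ^ 2 = ∫ y in closedBall (0 : PlaneE) ρ,
      (MvPolynomial.eval (fun i => y i) q) ^ 2 := by
    rw [← real_inner_self_eq_norm_sq, L2.inner_def]
    refine integral_congr_ae ?_
    filter_upwards [(pe_memLp q ρ).coeFn_toLp] with x hx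
    simp only [peT, LinearMap.coe_mk, AddHom.coe_mk]
    rw [hx]
    simp [pow_two]
  rw [← h, Real.sqrt_sq (norm_nonneg _)]

lemma peT_inj (ρ : ℝ) (hρ : 0 < ρ) : Function.Injective (peT ρ) := by
  rw [injective_iff_map_eq_zero]
  intro q hq
  have h1 : (fun x : PlaneE => MvPolynomial.eval (fun i => x i) q)
      =ᵐ[volume.restrict (closedBall (0 : PlaneE) ρ)] (fun _ => (0 : ℝ)) := by
    have h2 := (pe_memLp q ρ).coeFn_toLp
    have h3 : (pe_memLp q ρ).toLp _ = 0 := hq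
    rw [h3] at h2
    exact h2.symm.trans (Lp.coeFn_zero _ _ _)
  have h4 := Measure.eqOn_open_of_ae_eq
    (ae_restrict_of_ae_restrict_of_subset ball_subset_closedBall h1) isOpen_ball
    (pe_cont q).continuousOn continuousOn_const
  refine MvPolynomial.funext_set (fun _ => Set.Ioo 0 (ρ / 2))
    (fun _ => Set.Ioo_infinite (by positivity)) fun x hx => ?_
  have h5 := @h4 (WithLp.toLp 2 x) ?_
  · simpa using h5
  · rw [mem_ball_zero_iff, EuclideanSpace.norm_eq, Real.sqrt_lt' hρ]
    have a := hx 0 trivial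
    have b := hx 1 trivial
    simp only [Set.mem_Ioo] at a b
    simp only [Fin.sum_univ_two, Real.norm_eq_abs, sq_abs]
    nlinarith

lemma pe_ref (n : ℕ) (ρ : ℝ) (hρ : 0 < ρ) : ∃ C > (0 : ℝ),
    ∀ q : MvPolynomial (Fin 2) ℝ, q.totalDegree ≤ n → ∀ x ∈ closedBall (0 : PlaneE) 1,
      |MvPolynomial.eval (fun i => x i) q| ≤ C * Real.sqrt (∫ y in closedBall (0 : PlaneE) ρ,
        (MvPolynomial.eval (fun i => y i) q) ^ 2) := by
  let V := MvPolynomial.restrictTotalDegree (Fin 2) ℝ n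
  let T := (peT ρ).comp V.subtype
  have hT : Function.Injective T := (peT_inj ρ hρ).comp Subtype.val_injective
  let e := LinearEquiv.ofInjective T hT
  haveI : FiniteDimensional ℝ (LinearMap.range T) := inferInstance
  let L := LinearMap.toContinuousLinearMap ((peS.comp V.subtype).comp e.symm.toLinearMap)
  refine ⟨‖L‖ + 1, by positivity, fun q hq x hx => ?_⟩
  let v : V := ⟨q, (MvPolynomial.mem_restrictTotalDegree _ _ _).2 hq⟩
  have h1 : L (e v) = peS q := by
    simp [L, v]
  have h2 := L.le_opNorm (e v)
  have h3 : ‖e v‖ = ‖peT ρ q‖ := rfl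
  rw [h1, h3, peT_norm] at h2
  have h4 := (peS q).norm_coe_le_norm ⟨x, hx⟩
  have h5 : ‖peS q ⟨x, hx⟩‖ = |MvPolynomial.eval (fun i => x i) q| := rfl
  rw [h5] at h4
  have := Real.sqrt_nonneg (∫ y in closedBall (0 : PlaneE) ρ,
        (MvPolynomial.eval (fun i => y i) q) ^ 2)
  linarith

lemma pe_deg (q : MvPolynomial (Fin 2) ℝ) (f : Fin 2 → MvPolynomial (Fin 2) ℝ)
    (hf : ∀ i, (f i).totalDegree ≤ 1) :
    (MvPolynomial.aeval f q).totalDegree ≤ q.totalDegree := by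
  rw [MvPolynomial.aeval_def, MvPolynomial.eval₂_eq']
  refine MvPolynomial.totalDegree_finsetSum_le fun d hd => ?_
  refine (MvPolynomial.totalDegree_mul _ _).trans ?_
  have h0 : (algebraMap ℝ (MvPolynomial (Fin 2) ℝ) (q.coeff d)).totalDegree = 0 :=
    MvPolynomial.totalDegree_C _
  rw [h0, zero_add]
  refine (MvPolynomial.totalDegree_finsetProd _ _).trans ?_
  refine le_trans ?_ (MvPolynomial.le_totalDegree hd)
  rw [Finsupp.sum_fintype _ _ (by simp)]
  refine Finset.sum_le_sum fun i _ => ?_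
  refine (MvPolynomial.totalDegree_pow _ _).trans ?_
  simpa using Nat.mul_le_mul_left (d i) (hf i)

/-- `L^∞`–`L²` polynomial inverse inequality on a shape-regular planar element:
if `closedBall x0 (ρ*h) ⊆ K ⊆ closedBall x0 h` and `p` is a polynomial function of total
degree at most `n`, then `sup_K |p| ≤ C h⁻¹ ‖p‖_{L²(K)}` with `C` depending only on `n`
and `ρ`. -/
theorem stmt3 (n : ℕ) (ρ : ℝ) (hρ0 : 0 < ρ) (hρ1 : ρ ≤ 1) :
    ∃ C > (0 : ℝ),
      ∀ (x0 : EuclideanSpace ℝ (Fin 2)) (h : ℝ), 0 < h →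
        ∀ K : Set (EuclideanSpace ℝ (Fin 2)), MeasurableSet K →
          closedBall x0 (ρ * h) ⊆ K → K ⊆ closedBall x0 h →
            ∀ q : MvPolynomial (Fin 2) ℝ, q.totalDegree ≤ n →
              ∀ x ∈ K,
                |MvPolynomial.eval (fun i => x i) q| ≤
                  C * h⁻¹ *
                    Real.sqrt (∫ y in K, (MvPolynomial.eval (fun i => y i) q) ^ 2 ∂volume) := by
  obtain ⟨C, hC, H⟩ := pe_ref n ρ hρ0
  refine ⟨C, hC, fun x0 h hh K hK hK1 hK2 q hq x hx => ?_⟩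
  let f : Fin 2 → MvPolynomial (Fin 2) ℝ :=
    fun i => MvPolynomial.C (x0 i) + MvPolynomial.C h * MvPolynomial.X i
  have hf : ∀ i, (f i).totalDegree ≤ 1 := by
    intro i
    refine (MvPolynomial.totalDegree_add _ _).trans (max_le (by simp) ?_)
    refine (MvPolynomial.totalDegree_mul _ _).trans (by simp)
  have hev : ∀ z : PlaneE, MvPolynomial.eval (fun i => z i) (MvPolynomial.aeval f q)
      = MvPolynomial.eval (fun i => (x0 + h • z) i) q := by
    intro z
    rw [← MvPolynomial.coe_aeval_eq_eval, ← MvPolynomial.coe_aeval_eq_eval]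
    simp only [RingHom.coe_coe]
    rw [← AlgHom.comp_apply, MvPolynomial.comp_aeval]
    congr 2
    ext i
    simp [f]
  have hxz : x0 + h • (h⁻¹ • (x - x0)) = x := by
    rw [smul_inv_smul₀ hh.ne']; abel
  have hz : h⁻¹ • (x - x0) ∈ closedBall (0 : PlaneE) 1 := by
    have := hK2 hx
    rw [mem_closedBall, dist_eq_norm] at this
    rw [mem_closedBall_zero_iff, norm_smul, Real.norm_of_nonneg (by positivity),
      inv_mul_le_iff₀ hh]
    simpa using this
  have h1 := H _ ((pe_deg q f hf).trans hq) _ hz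
  simp only [hev] at h1
  rw [hxz] at h1
  refine h1.trans ?_
  rw [mul_assoc]
  refine mul_le_mul_of_nonneg_left ?_ hC.le
  let g : PlaneE → ℝ := fun y => (MvPolynomial.eval (fun i => y i) q) ^ 2
  have hcv : ∫ y in closedBall (0 : PlaneE) ρ, g (x0 + h • y)
      = (h ^ 2)⁻¹ * ∫ y in closedBall x0 (ρ * h), g y := by
    rw [← integral_indicator measurableSet_closedBall, ← integral_indicator measurableSet_closedBall]
    have e1 : (closedBall (0 : PlaneE) ρ).indicator (fun y => g (x0 + h • y)) =
        fun y => (fun w => (closedBall x0 (ρ * h)).indicator g (x0 + w)) (h • y) := by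
      ext y
      have : y ∈ closedBall (0 : PlaneE) ρ ↔ x0 + h • y ∈ closedBall x0 (ρ * h) := by
        rw [mem_closedBall_zero_iff, mem_closedBall, dist_eq_norm, add_sub_cancel_left, norm_smul,
          Real.norm_of_nonneg hh.le, mul_comm h, mul_le_mul_iff_left₀ hh]
      by_cases hy : y ∈ closedBall (0 : PlaneE) ρ
      · simp only [Set.indicator_of_mem hy, Set.indicator_of_mem (this.1 hy)]
      · simp only [Set.indicator_of_notMem hy, Set.indicator_of_notMem (mt this.2 hy)]
    rw [e1, Measure.integral_comp_smul_of_nonneg volume _ h (hR := hh.le), integral_add_left_eq_self]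
    simp
  have hmono : ∫ y in closedBall x0 (ρ * h), g y ≤ ∫ y in K, g y := by
    refine setIntegral_mono_set ?_ (Filter.Eventually.of_forall fun y => sq_nonneg _)
      hK1.eventuallyLE
    exact (((pe_cont q).pow 2).continuousOn.integrableOn_compact
      (isCompact_closedBall x0 h)).mono_set hK2
  change √(∫ y in closedBall (0 : PlaneE) ρ, g (x0 + h • y)) ≤ h⁻¹ * √(∫ y in K, g y)
  rw [hcv, Real.sqrt_mul (by positivity), Real.sqrt_inv, Real.sqrt_sq hh.le]
  gcongr
end

section
/- Let a < b be real numbers and let γ : ℝ → ℝ² be differentiable on [a, b] with derivative γ′ that is Lipschitz with constant L ≥ 0 on [a, b]. Define the chord parametrization ζ(t) = γ(a) + ((t − a)/(b − a)) · (γ(b) − γ(a)). Then for every t ∈ [a, b], ‖ γ(t) − ζ(t) ‖ ≤ L · (b − a)², where ‖·‖ is the Euclidean norm on ℝ². -/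
/-- Second-order chord–curve closeness estimate: if `γ : ℝ → ℝ²` is differentiable on
`[a, b]` with derivative `γ'` Lipschitz with constant `L` on `[a, b]`, and
`ζ(t) = γ(a) + ((t - a)/(b - a)) (γ(b) - γ(a))` is the affine parametrization of the chord,
then `‖γ(t) - ζ(t)‖ ≤ L (b - a)²` for every `t ∈ [a, b]`. -/
theorem stmt6 (a b : ℝ) (hab : a < b) (L : ℝ) (hL : 0 ≤ L)
    (γ γ' : ℝ → EuclideanSpace ℝ (Fin 2))
    (hdiff : ∀ t ∈ Set.Icc a b, HasDerivWithinAt γ (γ' t) (Set.Icc a b) t)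
    (hlip : ∀ s ∈ Set.Icc a b, ∀ t ∈ Set.Icc a b, ‖γ' s - γ' t‖ ≤ L * |s - t|) :
    ∀ t ∈ Set.Icc a b,
      ‖γ t - (γ a + ((t - a) / (b - a)) • (γ b - γ a))‖ ≤ L * (b - a) ^ 2 := by
  intro t ht
  have hba : 0 < b - a := sub_pos.mpr hab
  have hg : ∀ s ∈ Set.Icc a b,
      HasDerivWithinAt (fun s => γ s - s • γ' t) (γ' s - γ' t) (Set.Icc a b) s := by
    intro s hs
    have h := (hdiff s hs).sub ((hasDerivWithinAt_id s (Set.Icc a b)).smul_const (γ' t))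
    rw [one_smul] at h
    exact h
  have hb : ∀ s ∈ Set.Icc a b, ‖γ' s - γ' t‖ ≤ L * (b - a) := by
    intro s hs
    refine (hlip s hs t ht).trans (mul_le_mul_of_nonneg_left ?_ hL)
    rw [abs_le]
    constructor <;> linarith [hs.1, hs.2, ht.1, ht.2]
  have key : ∀ s ∈ Set.Icc a b,
      ‖(γ t - t • γ' t) - (γ s - s • γ' t)‖ ≤ L * (b - a) ^ 2 := by
    intro s hs
    have h := Convex.norm_image_sub_le_of_norm_hasDerivWithin_le hg hb (convex_Icc a b) hs ht
    have h2 : ‖t - s‖ ≤ b - a := by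
      rw [Real.norm_eq_abs, abs_le]
      constructor <;> linarith [hs.1, hs.2, ht.1, ht.2]
    calc _ ≤ L * (b - a) * ‖t - s‖ := h
      _ ≤ L * (b - a) * (b - a) := mul_le_mul_of_nonneg_left h2 (by positivity)
      _ = _ := by ring
  have ka := key a ⟨le_rfl, hab.le⟩
  have kb := key b ⟨hab.le, le_rfl⟩
  obtain ⟨r, hr⟩ : ∃ r, r = (t - a) / (b - a) := ⟨_, rfl⟩
  have hr0 : 0 ≤ r := hr ▸ div_nonneg (by linarith [ht.1]) hba.le
  have hr1 : r ≤ 1 := hr ▸ (div_le_one hba).mpr (by linarith [ht.2])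
  have hrt : t = a + r * (b - a) := by
    rw [hr, div_mul_cancel₀ _ hba.ne']; ring
  rw [← hr]
  have e : γ t - (γ a + r • (γ b - γ a)) =
      (1 - r) • ((γ t - t • γ' t) - (γ a - a • γ' t))
        + r • ((γ t - t • γ' t) - (γ b - b • γ' t)) := by
    generalize γ' t = v
    generalize γ t = w
    rw [hrt]
    module
  rw [e]
  refine (norm_add_le _ _).trans ?_
  rw [norm_smul, norm_smul, Real.norm_of_nonneg hr0, Real.norm_of_nonneg (sub_nonneg.mpr hr1)]
  nlinarith [mul_le_mul_of_nonneg_left ka (sub_nonneg.mpr hr1), mul_le_mul_of_nonneg_left kb hr0]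
end

section
/- Let a < b be real numbers, let m > 0, and let γ : ℝ → ℝ² be differentiable on [a, b] with derivative γ′ that is Lipschitz with constant L ≥ 0 on [a, b] and satisfies ‖γ′(t)‖ ≥ m for all t ∈ [a, b]. Assume γ(b) ≠ γ(a). Then for every t ∈ [a, b], ‖ γ′(t)/‖γ′(t)‖ − (γ(b) − γ(a))/‖γ(b) − γ(a)‖ ‖ ≤ 2 L (b − a) / m, where ‖·‖ is the Euclidean norm on ℝ². -/
/-- Unit-tangent closeness estimate: for a regular parametrization `γ` of a curved edge
with `‖γ'‖ ≥ m` and `γ'` Lipschitz with constant `L` on `[a, b]`, the unit tangent of the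
curve differs from the unit tangent of the chord by at most `2 L (b - a) / m`. -/
theorem stmt7 (a b : ℝ) (hab : a < b) (m : ℝ) (hm : 0 < m) (L : ℝ) (hL : 0 ≤ L)
    (γ γ' : ℝ → EuclideanSpace ℝ (Fin 2))
    (hdiff : ∀ t ∈ Set.Icc a b, HasDerivWithinAt γ (γ' t) (Set.Icc a b) t)
    (hlip : ∀ s ∈ Set.Icc a b, ∀ t ∈ Set.Icc a b, ‖γ' s - γ' t‖ ≤ L * |s - t|)
    (hreg : ∀ t ∈ Set.Icc a b, m ≤ ‖γ' t‖)
    (hne : γ b ≠ γ a) :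
    ∀ t ∈ Set.Icc a b,
      ‖‖γ' t‖⁻¹ • γ' t - ‖γ b - γ a‖⁻¹ • (γ b - γ a)‖ ≤ 2 * L * (b - a) / m := by
  intro t ht
  have hh : 0 < b - a := sub_pos.2 hab
  have key : ‖(γ b - γ a) - (b - a) • γ' t‖ ≤ L * (b - a) * (b - a) := by
    have h := Convex.norm_image_sub_le_of_norm_hasDerivWithin_le
      (f := fun s => γ s - s • γ' t) (f' := fun s => γ' s - (1 : ℝ) • γ' t)
      (s := Set.Icc a b) (x := a) (y := b) (C := L * (b - a))
      (fun s hs => (hdiff s hs).sub ((hasDerivWithinAt_id s _).smul_const (γ' t)))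
      (fun s hs => by
        rw [one_smul]
        refine (hlip s hs t ht).trans (mul_le_mul_of_nonneg_left ?_ hL)
        rw [abs_le]
        constructor <;> linarith [hs.1, hs.2, ht.1, ht.2])
      (convex_Icc a b) (Set.left_mem_Icc.2 hab.le) (Set.right_mem_Icc.2 hab.le)
    rw [Real.norm_eq_abs, abs_of_pos hh] at h
    have e0 : (γ b - γ a) - (b - a) • γ' t = (γ b - b • γ' t) - (γ a - a • γ' t) := by
      module
    rw [e0]
    exact h
  have hv := hreg t ht
  generalize γ' t = v at *
  have hw : γ b - γ a ≠ 0 := sub_ne_zero.2 hne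
  generalize γ b - γ a = w at *
  have hwn : 0 < ‖w‖ := norm_pos_iff.2 hw
  have hvn : 0 < ‖v‖ := hm.trans_le hv
  generalize b - a = h at *
  have e : (h * ‖v‖) • (‖v‖⁻¹ • v - ‖w‖⁻¹ • w)
      = (‖w‖ - ‖h • v‖) • (‖w‖⁻¹ • w) - (w - h • v) := by
    rw [norm_smul, Real.norm_eq_abs, abs_of_pos hh, smul_sub, sub_smul, smul_smul,
      mul_assoc, mul_inv_cancel₀ hvn.ne', mul_one, smul_inv_smul₀ hwn.ne']
    module
  have hu : ‖‖w‖⁻¹ • w‖ = 1 := by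
    rw [norm_smul, norm_inv, norm_norm, inv_mul_cancel₀ hwn.ne']
  have h1 : h * ‖v‖ * ‖‖v‖⁻¹ • v - ‖w‖⁻¹ • w‖ ≤ 2 * (L * h * h) := by
    have h2 := congrArg norm e
    rw [norm_smul, Real.norm_eq_abs, abs_of_pos (mul_pos hh hvn)] at h2
    rw [h2]
    refine (norm_sub_le _ _).trans ?_
    rw [norm_smul, hu, mul_one, Real.norm_eq_abs]
    linarith [abs_norm_sub_norm_le w (h • v)]
  rw [le_div_iff₀ hm]
  have h3 := mul_le_mul_of_nonneg_left hv (norm_nonneg (‖v‖⁻¹ • v - ‖w‖⁻¹ • w))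
  refine h3.trans (le_of_mul_le_mul_left ?_ hh)
  linarith
end

section
/- Let W be a real vector space equipped with a seminorm |·|, let V_h ⊆ W be a linear subspace, and let a, a_h : W → W → ℝ be bilinear maps. Assume there are constants α > 0 and M > 0 such that α · |v|² ≤ a_h(v, v) for all v ∈ V_h, and |a_h(w, v)| ≤ M · |w| · |v| for all w ∈ W and v ∈ V_h. Let u ∈ W and u_h ∈ V_h, let F, F_h, N : W → ℝ be linear functionals, and let δ ≥ 0. Assume: (i) a(u, v) = F(v) + N(v) for all v ∈ V_h; (ii) a_h(u_h, v) = F_h(v) for all v ∈ V_h; (iii) |F(v) − F_h(v)| + |N(v)| + |a_h(u, v) − a(u, v)| ≤ δ · |v| for all v ∈ V_h. Then for every u_I ∈ V_h, |u − u_h| ≤ (1 + M/α) · |u − u_I| + δ/α. -/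
/-- Abstract Strang-type error estimate: with a seminorm `p` on `W`, a subspace `V_h`,
bilinear forms `a`, `a_h` such that `a_h` is coercive on `V_h` (constant `α`) and bounded
(constant `M`), exact and discrete solutions `u`, `u_h` related through load functionals
`F`, `F_h` and a nonconformity functional `N`, with total perturbation bounded by `δ`,
one has `p (u - u_h) ≤ (1 + M/α) p (u - u_I) + δ/α` for every `u_I ∈ V_h`. -/
theorem stmt11 {W : Type*} [AddCommGroup W] [Module ℝ W]
    (p : Seminorm ℝ W) (Vh : Submodule ℝ W)
    (a ah : W →ₗ[ℝ] W →ₗ[ℝ] ℝ)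
    (α Mc : ℝ) (hα : 0 < α) (hM : 0 < Mc)
    (hcoer : ∀ v ∈ Vh, α * (p v) ^ 2 ≤ ah v v)
    (hbdd : ∀ w : W, ∀ v ∈ Vh, |ah w v| ≤ Mc * p w * p v)
    (u : W) (uh : W) (huh : uh ∈ Vh)
    (F Fh N : W →ₗ[ℝ] ℝ) (δ : ℝ) (hδ : 0 ≤ δ)
    (hexact : ∀ v ∈ Vh, a u v = F v + N v)
    (hdiscrete : ∀ v ∈ Vh, ah uh v = Fh v)
    (hpert : ∀ v ∈ Vh, |F v - Fh v| + |N v| + |ah u v - a u v| ≤ δ * p v) :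
    ∀ uI ∈ Vh, p (u - uh) ≤ (1 + Mc / α) * p (u - uI) + δ / α := by
  intro uI hI
  have he : uI - uh ∈ Vh := Vh.sub_mem hI huh
  have h1 := hcoer _ he
  have h2 := hbdd (u - uI) _ he
  have h3 := hpert _ he
  have h4 := hexact _ he
  have h5 := hdiscrete _ he
  have h6 : ah (uI - uh) (uI - uh)
      = ah u (uI - uh) - ah (u - uI) (uI - uh) - ah uh (uI - uh) := by
    simp only [map_sub, LinearMap.sub_apply]
    ring
  have htri : p (u - uh) ≤ p (u - uI) + p (uI - uh) := by
    have := map_add_le_add p (u - uI) (uI - uh)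
    rwa [sub_add_sub_cancel] at this
  have hd := apply_nonneg p (u - uI)
  have hn := apply_nonneg p (uI - uh)
  generalize uI - uh = e at *
  have hkey : α * (p e) ^ 2 ≤ (Mc * p (u - uI) + δ) * p e := by
    have k1 := neg_abs_le (ah (u - uI) e)
    have k2 := le_abs_self (F e - Fh e)
    have k3 := le_abs_self (N e)
    have k4 := le_abs_self (ah u e - a u e)
    linarith
  have hfin : p e ≤ (Mc * p (u - uI) + δ) / α := by
    rw [le_div_iff₀ hα]
    rcases hn.eq_or_lt with h | h
    · rw [← h, zero_mul]
      positivity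
    · refine le_of_mul_le_mul_right ?_ h
      linarith
  have : (1 + Mc / α) * p (u - uI) + δ / α = p (u - uI) + (Mc * p (u - uI) + δ) / α := by
    ring
  linarith
end
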